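/- Let d = 2 or d = 3, let Δt > 0 and L ≥ 0 satisfy Δt·L ≤ 1/4, and let w₁, w₂ : ℝ^d → ℝ^d be everywhere-differentiable maps whose Jacobian matrices have Frobenius norm at most L at every point. Let v : ℝ^d → ℝ^m be continuously differentiable with compact support. Then (∫_{ℝ^d} ‖v(x − Δt·w₁(x)) − v(x − Δt·w₂(x))‖² dx)^{1/2} ≤ √2 · Δt · (sup_{x ∈ ℝ^d} ‖w₁(x) − w₂(x)‖) · (∫_{ℝ^d} ‖Dv(y)‖_F² dy)^{1/2}, where ‖Dv(y)‖_F is the Frobenius norm of the Jacobian matrix of v at y and all integrals are with respect to Lebesgue measure. -/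

import Mathlib

open MeasureTheory

/-- The Frobenius norm of the Jacobian matrix of `f` at `x`. -/
noncomputable def jacobianFrobeniusNorm {d m : ℕ}
    (f : EuclideanSpace ℝ (Fin d) → EuclideanSpace ℝ (Fin m))
    (x : EuclideanSpace ℝ (Fin d)) : ℝ :=
  Real.sqrt (∑ i, ∑ j, (fderiv ℝ f x (EuclideanSpace.single j (1 : ℝ)) i) ^ 2)

/-- The Frobenius norm dominates the operator norm. -/
lemma norm_apply_sq_le_sum_sq {d m : ℕ}
    (A : EuclideanSpace ℝ (Fin d) →L[ℝ] EuclideanSpace ℝ (Fin m)) (u : EuclideanSpace ℝ (Fin d)) :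
    ‖A u‖ ^ 2 ≤ (∑ i, ∑ j, (A (EuclideanSpace.single j (1 : ℝ)) i) ^ 2) * ‖u‖ ^ 2 := by
  rw [EuclideanSpace.norm_sq_eq, EuclideanSpace.norm_sq_eq, Finset.sum_mul]
  refine Finset.sum_le_sum fun i _ => ?_
  have hu : A u i = ∑ j, A (EuclideanSpace.single j (1 : ℝ)) i * u j := by
    conv_lhs => rw [← (EuclideanSpace.basisFun (Fin d) ℝ).sum_repr u]
    simp [map_sum, mul_comm]
  simp only [Real.norm_eq_abs, sq_abs]
  rw [hu]
  exact Finset.sum_mul_sq_le_sq_mul_sq _ _ _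

lemma jacobianFrobeniusNorm_sq {d m : ℕ}
    (f : EuclideanSpace ℝ (Fin d) → EuclideanSpace ℝ (Fin m)) (x : EuclideanSpace ℝ (Fin d)) :
    jacobianFrobeniusNorm f x ^ 2 =
      ∑ i, ∑ j, (fderiv ℝ f x (EuclideanSpace.single j (1 : ℝ)) i) ^ 2 :=
  Real.sq_sqrt (by positivity)

lemma ContDiff.continuous_jacobianFrobeniusNorm {d m : ℕ}
    {f : EuclideanSpace ℝ (Fin d) → EuclideanSpace ℝ (Fin m)} (hf : ContDiff ℝ 1 f) :
    Continuous (jacobianFrobeniusNorm f) := by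
  have h := hf.continuous_fderiv one_ne_zero
  unfold jacobianFrobeniusNorm
  fun_prop

lemma jacobianFrobeniusNorm_convexCombination_le {d m : ℕ}
    {f g : EuclideanSpace ℝ (Fin d) → EuclideanSpace ℝ (Fin m)} {x : EuclideanSpace ℝ (Fin d)}
    (hf : DifferentiableAt ℝ f x) (hg : DifferentiableAt ℝ g x) {L s : ℝ} (hL : 0 ≤ L)
    (hfL : jacobianFrobeniusNorm f x ≤ L) (hgL : jacobianFrobeniusNorm g x ≤ L)
    (hs₀ : 0 ≤ s) (hs₁ : s ≤ 1) :
    jacobianFrobeniusNorm (fun y => (1 - s) • f y + s • g y) x ≤ L := by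
  have hf2 := pow_le_pow_left₀ (Real.sqrt_nonneg _) hfL 2
  have hg2 := pow_le_pow_left₀ (Real.sqrt_nonneg _) hgL 2
  rw [← jacobianFrobeniusNorm, jacobianFrobeniusNorm_sq] at hf2 hg2
  refine le_of_sq_le_sq ?_ hL
  have hfg : HasFDerivAt (fun y => (1 - s) • f y + s • g y)
      ((1 - s) • fderiv ℝ f x + s • fderiv ℝ g x) x :=
    (hf.hasFDerivAt.const_smul (1 - s)).add (hg.hasFDerivAt.const_smul s)
  rw [jacobianFrobeniusNorm_sq, hfg.fderiv]
  calc _ ≤ ∑ i, ∑ j, ((1 - s) * (fderiv ℝ f x (EuclideanSpace.single j (1 : ℝ)) i) ^ 2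
          + s * (fderiv ℝ g x (EuclideanSpace.single j (1 : ℝ)) i) ^ 2) := by
        refine Finset.sum_le_sum fun i _ => Finset.sum_le_sum fun j _ => ?_
        simp only [add_apply, smul_apply, PiLp.add_apply,
          PiLp.smul_apply, smul_eq_mul]
        generalize fderiv ℝ f x (EuclideanSpace.single j (1 : ℝ)) i = a
        generalize fderiv ℝ g x (EuclideanSpace.single j (1 : ℝ)) i = b
        nlinarith [mul_nonneg (mul_nonneg hs₀ (sub_nonneg.2 hs₁)) (sq_nonneg (a - b))]
    _ ≤ L ^ 2 := by
        simp only [Finset.sum_add_distrib, ← Finset.mul_sum]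
        nlinarith [mul_le_mul_of_nonneg_left hf2 (sub_nonneg.2 hs₁),
          mul_le_mul_of_nonneg_left hg2 hs₀]

lemma half_le_det_one_sub_fin_two (B : Matrix (Fin 2) (Fin 2) ℝ)
    (hB : ∑ i, ∑ j, B i j ^ 2 ≤ 1 / 16) : 1 / 2 ≤ (1 - B).det := by
  rw [Matrix.det_fin_two]
  simp only [Fin.sum_univ_two] at hB
  simp only [Matrix.sub_apply, Matrix.one_apply_eq, Matrix.one_apply, Fin.isValue, zero_ne_one,
    one_ne_zero, if_false]
  nlinarith [sq_nonneg (B 0 0 + B 1 1), sq_nonneg (B 0 1 - B 1 0), sq_nonneg (B 0 0 - 1 / 4),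
    sq_nonneg (B 1 1 - 1 / 4), sq_nonneg (B 0 1), sq_nonneg (B 1 0)]

lemma half_le_det_one_sub_fin_three (B : Matrix (Fin 3) (Fin 3) ℝ)
    (hB : ∑ i, ∑ j, B i j ^ 2 ≤ 1 / 16) : 1 / 2 ≤ (1 - B).det := by
  rw [Matrix.det_fin_three]
  simp only [Fin.sum_univ_three] at hB
  simp only [Matrix.sub_apply, Matrix.one_apply, Fin.isValue, Fin.reduceEq, if_true, if_false]
  generalize B 0 0 = a at *
  generalize B 0 1 = b at *
  generalize B 0 2 = c at *
  generalize B 1 0 = p at *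
  generalize B 1 1 = q at *
  generalize B 1 2 = r at *
  generalize B 2 0 = x at *
  generalize B 2 1 = y at *
  generalize B 2 2 = z at *
  have htr : a + q + z ≤ 0.4331 := by
    refine le_of_sq_le_sq ?_ (by norm_num)
    nlinarith [sq_nonneg (a - q), sq_nonneg (a - z), sq_nonneg (q - z), sq_nonneg b, sq_nonneg c,
      sq_nonneg p, sq_nonneg r, sq_nonneg x, sq_nonneg y]
  have hminors : -(1 / 32) ≤ (a * q - b * p) + (a * z - c * x) + (q * z - r * y) := by
    nlinarith [sq_nonneg (a + q + z), sq_nonneg (b - p), sq_nonneg (c - x), sq_nonneg (r - y)]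
  have hentry : ∀ t : ℝ, t ^ 2 ≤ 1 / 16 → |t| ≤ 1 / 4 := fun t ht =>
    abs_le_of_sq_le_sq (by linarith) (by norm_num)
  have hprod : ∀ t k : ℝ, t ^ 2 ≤ 1 / 16 → |k| ≤ 1 / 32 → t * k ≤ 1 / 128 := fun t k ht hk => by
    calc t * k ≤ |t| * |k| := by rw [← abs_mul]; exact le_abs_self _
      _ ≤ 1 / 4 * (1 / 32) := by
        gcongr
        exact hentry t ht
      _ = 1 / 128 := by norm_num
  have ha := hprod a (q * z - r * y) (by nlinarith) (by
    rw [abs_le]; constructor <;> nlinarith [sq_nonneg (q + z), sq_nonneg (q - z),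
      sq_nonneg (r + y), sq_nonneg (r - y), sq_nonneg a, sq_nonneg b, sq_nonneg c, sq_nonneg p,
      sq_nonneg x])
  have hb := hprod b (r * x - p * z) (by nlinarith) (by
    rw [abs_le]; constructor <;> nlinarith [sq_nonneg (r + x), sq_nonneg (r - x),
      sq_nonneg (p + z), sq_nonneg (p - z), sq_nonneg a, sq_nonneg b, sq_nonneg c, sq_nonneg q,
      sq_nonneg y])
  have hc := hprod c (p * y - q * x) (by nlinarith) (by
    rw [abs_le]; constructor <;> nlinarith [sq_nonneg (p + y), sq_nonneg (p - y),
      sq_nonneg (q + x), sq_nonneg (q - x), sq_nonneg a, sq_nonneg b, sq_nonneg c, sq_nonneg r,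
      sq_nonneg z])
  linarith

lemma half_le_det_id_sub {d : ℕ} (hd : d = 2 ∨ d = 3)
    (B : EuclideanSpace ℝ (Fin d) →L[ℝ] EuclideanSpace ℝ (Fin d))
    (hB : ∑ i, ∑ j, (B (EuclideanSpace.single j (1 : ℝ)) i) ^ 2 ≤ 1 / 16) :
    1 / 2 ≤ (ContinuousLinearMap.id ℝ _ - B).det := by
  let b := (EuclideanSpace.basisFun (Fin d) ℝ).toBasis
  have hdet : (ContinuousLinearMap.id ℝ _ - B).det = (1 - LinearMap.toMatrix b b B).det := by
    rw [ContinuousLinearMap.det, ← LinearMap.det_toMatrix b, ContinuousLinearMap.toLinearMap_sub, map_sub,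
      ContinuousLinearMap.coe_id, LinearMap.toMatrix_id]
  rw [hdet]
  have hM : ∑ i, ∑ j, (LinearMap.toMatrix b b B) i j ^ 2 ≤ 1 / 16 := by
    simpa [LinearMap.toMatrix_apply, b] using hB
  rcases hd with rfl | rfl
  · exact half_le_det_one_sub_fin_two _ hM
  · exact half_le_det_one_sub_fin_three _ hM

/-- Composition with `x ↦ x - Δt·w(x)` at most doubles the integral of a nonnegative function. -/
lemma lintegral_comp_sub_smul_le {d : ℕ} (hd : d = 2 ∨ d = 3) {Δt L : ℝ} (hΔt : 0 < Δt)
    (hΔtL : Δt * L ≤ 1 / 4) {w : EuclideanSpace ℝ (Fin d) → EuclideanSpace ℝ (Fin d)}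
    (hw : Differentiable ℝ w) (hJ : ∀ x, jacobianFrobeniusNorm w x ≤ L)
    (g : EuclideanSpace ℝ (Fin d) → ENNReal) :
    ∫⁻ x, g (x - Δt • w x) ≤ 2 * ∫⁻ y, g y := by
  have hB : ∀ x, ∑ i, ∑ j,
      ((Δt • fderiv ℝ w x) (EuclideanSpace.single j (1 : ℝ)) i) ^ 2 ≤ 1 / 16 := fun x => by
    have h0 : 0 ≤ jacobianFrobeniusNorm w x := Real.sqrt_nonneg _
    have h1 : Δt * jacobianFrobeniusNorm w x ≤ 1 / 4 :=
      (mul_le_mul_of_nonneg_left (hJ x) hΔt.le).trans hΔtL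
    have h2 := pow_le_pow_left₀ (by positivity) h1 2
    rw [mul_pow, jacobianFrobeniusNorm_sq, Finset.mul_sum] at h2
    simp only [Finset.mul_sum, ← mul_pow] at h2
    simp only [smul_apply, PiLp.smul_apply, smul_eq_mul]
    linarith
  have hdw : ∀ x, HasFDerivAt (fun x => Δt • w x) (Δt • fderiv ℝ w x) x := fun x =>
    (hw x).hasFDerivAt.const_smul Δt
  have hlip : ∀ x y, ‖Δt • w x - Δt • w y‖ ≤ 1 / 4 * ‖x - y‖ := fun x y =>
    convex_univ.norm_image_sub_le_of_norm_hasFDerivWithin_le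
      (fun z _ => (hdw z).hasFDerivWithinAt)
      (fun z _ => ContinuousLinearMap.opNorm_le_bound _ (by norm_num) fun u => by
        refine le_of_sq_le_sq ?_ (by positivity)
        refine (norm_apply_sq_le_sum_sq _ u).trans ?_
        rw [mul_pow]
        refine mul_le_mul_of_nonneg_right ((hB z).trans (by norm_num)) (by positivity))
      (Set.mem_univ _) (Set.mem_univ _)
  have hinj : Function.Injective fun x => x - Δt • w x := fun x y hxy => by
    have h : x - y = Δt • w x - Δt • w y := by
      have : x - Δt • w x = y - Δt • w y := hxy
      rw [sub_eq_sub_iff_add_eq_add] at this ⊢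
      rw [this, add_comm]
    have h' := hlip x y
    rw [← h] at h'
    exact sub_eq_zero.1 (norm_le_zero_iff.1 (by linarith))
  have hcov := lintegral_image_eq_lintegral_abs_det_fderiv_mul volume MeasurableSet.univ
    (fun x _ => ((hasFDerivAt_id x).sub (hdw x)).hasFDerivWithinAt) hinj.injOn g
  calc ∫⁻ x, g (x - Δt • w x)
      ≤ ∫⁻ x, 2 * (ENNReal.ofReal |(ContinuousLinearMap.id ℝ _ - Δt • fderiv ℝ w x).det|
          * g (x - Δt • w x)) := by
        refine lintegral_mono fun x => ?_
        rw [← mul_assoc]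
        refine le_mul_of_one_le_left (zero_le) ?_
        have h := (half_le_det_id_sub hd _ (hB x)).trans (le_abs_self _)
        calc (1 : ENNReal) = 2 * ENNReal.ofReal (1 / 2) := by
              rw [← ENNReal.ofReal_ofNat, ← ENNReal.ofReal_mul (by norm_num)]
              norm_num
          _ ≤ _ := mul_le_mul_right (ENNReal.ofReal_le_ofReal h) _
    _ = 2 * ∫⁻ y in (fun x => x - Δt • w x) '' Set.univ, g y := by
        rw [lintegral_const_mul' _ _ (by norm_num)]
        congr 1
        simpa using hcov.symm
    _ ≤ 2 * ∫⁻ y, g y := by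
        gcongr
        exact Measure.restrict_le_self

/-- The square of a difference is bounded by the integral of the squared derivative along the
segment. -/
lemma enorm_sub_sq_le_lintegral {d m : ℕ}
    {v : EuclideanSpace ℝ (Fin d) → EuclideanSpace ℝ (Fin m)} (hv : ContDiff ℝ 1 v)
    (x u : EuclideanSpace ℝ (Fin d)) :
    ‖v (x + u) - v x‖ₑ ^ 2 ≤ ‖u‖ₑ ^ 2 *
      ∫⁻ s in Set.Ioc (0 : ℝ) 1, ENNReal.ofReal (jacobianFrobeniusNorm v (x + s • u) ^ 2) := by
  have hcont : Continuous fun s : ℝ => fderiv ℝ v (x + s • u) u := by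
    have h := hv.continuous_fderiv one_ne_zero
    fun_prop
  have hderiv : ∀ s : ℝ, HasDerivAt (fun s : ℝ => v (x + s • u)) (fderiv ℝ v (x + s • u) u) s :=
    fun s => by
      have h1 : HasDerivAt (fun s : ℝ => x + s • u) u s := by
        simpa using ((hasDerivAt_id s).smul_const u).const_add x
      exact ((hv.differentiable one_ne_zero _).hasFDerivAt).comp_hasDerivAt s h1
  have hftc : v (x + u) - v x = ∫ s in Set.Ioc (0 : ℝ) 1, fderiv ℝ v (x + s • u) u := by
    rw [← intervalIntegral.integral_of_le zero_le_one,
      intervalIntegral.integral_eq_sub_of_hasDerivAt (fun s _ => hderiv s)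
        (hcont.intervalIntegrable _ _)]
    simp
  have hholder : (∫⁻ s in Set.Ioc (0 : ℝ) 1, ‖fderiv ℝ v (x + s • u) u‖ₑ) ^ 2 ≤
      ∫⁻ s in Set.Ioc (0 : ℝ) 1, ‖fderiv ℝ v (x + s • u) u‖ₑ ^ 2 := by
    have h := ENNReal.lintegral_mul_le_Lp_mul_Lq (volume.restrict (Set.Ioc (0 : ℝ) 1))
      Real.HolderConjugate.two_two hcont.enorm.measurable.aemeasurable
      (aemeasurable_const (b := (1 : ENNReal)))
    simp only [Pi.mul_apply, mul_one, lintegral_const, Measure.restrict_apply,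
      MeasurableSet.univ, Set.univ_inter, Real.volume_Ioc, sub_zero, ENNReal.ofReal_one,
      ENNReal.rpow_two, one_pow, ENNReal.one_rpow] at h
    calc _ ≤ _ := pow_le_pow_left₀ (zero_le) h 2
      _ = _ := by
        rw [← ENNReal.rpow_two, ← ENNReal.rpow_mul]
        norm_num
  rw [hftc, ← lintegral_const_mul' _ _ (by simp)]
  calc _ ≤ (∫⁻ s in Set.Ioc (0 : ℝ) 1, ‖fderiv ℝ v (x + s • u) u‖ₑ) ^ 2 := by
        gcongr
        exact enorm_integral_le_lintegral_enorm _
    _ ≤ _ := hholder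
    _ ≤ _ := by
        refine lintegral_mono fun s => ?_
        rw [← ofReal_norm, ← ofReal_norm, ← ENNReal.ofReal_pow (norm_nonneg _),
          ← ENNReal.ofReal_pow (norm_nonneg _), ← ENNReal.ofReal_mul (by positivity),
          jacobianFrobeniusNorm_sq, mul_comm]
        exact ENNReal.ofReal_le_ofReal (norm_apply_sq_le_sum_sq _ u)

/-- `L²` estimate for the difference of compositions with two approximate
characteristic maps `x ↦ x - Δt·wᵢ(x)`. -/
theorem L2_diff_comp_characteristic (d m : ℕ) (hd : d = 2 ∨ d = 3)
    (Δt L : ℝ) (hΔt : 0 < Δt) (hL : 0 ≤ L) (hΔtL : Δt * L ≤ 1 / 4)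
    (w₁ w₂ : EuclideanSpace ℝ (Fin d) → EuclideanSpace ℝ (Fin d))
    (hw₁ : Differentiable ℝ w₁) (hw₂ : Differentiable ℝ w₂)
    (hJ₁ : ∀ x, jacobianFrobeniusNorm w₁ x ≤ L)
    (hJ₂ : ∀ x, jacobianFrobeniusNorm w₂ x ≤ L)
    (v : EuclideanSpace ℝ (Fin d) → EuclideanSpace ℝ (Fin m))
    (hv : ContDiff ℝ 1 v) (hvsupp : HasCompactSupport v) :
    (∫⁻ x, (‖v (x - Δt • w₁ x) - v (x - Δt • w₂ x)‖₊ : ENNReal) ^ 2) ^ (1 / 2 : ℝ) ≤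
      ENNReal.ofReal (Real.sqrt 2 * Δt) * (⨆ x, (‖w₁ x - w₂ x‖₊ : ENNReal)) *
        (∫⁻ y, ENNReal.ofReal ((jacobianFrobeniusNorm v y) ^ 2)) ^ (1 / 2 : ℝ) := by
  set S := ⨆ x, (‖w₁ x - w₂ x‖₊ : ENNReal)
  set G : EuclideanSpace ℝ (Fin d) → ENNReal :=
    fun y => ENNReal.ofReal (jacobianFrobeniusNorm v y ^ 2)
  set w : ℝ → EuclideanSpace ℝ (Fin d) → EuclideanSpace ℝ (Fin d) :=
    fun s x => (1 - s) • w₂ x + s • w₁ x with hw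
  have hGm : Measurable G :=
    ((hv.continuous_jacobianFrobeniusNorm.pow 2).measurable).ennreal_ofReal
  have hc₁ := hw₁.continuous
  have hc₂ := hw₂.continuous
  have hφm : Measurable fun p : EuclideanSpace ℝ (Fin d) × ℝ => G (p.1 - Δt • w p.2 p.1) := by
    refine hGm.comp (Continuous.measurable ?_)
    simp only [hw]
    fun_prop
  have hpoint : ∀ x, (‖v (x - Δt • w₁ x) - v (x - Δt • w₂ x)‖₊ : ENNReal) ^ 2 ≤
      (ENNReal.ofReal Δt * S) ^ 2 * ∫⁻ s in Set.Ioc (0 : ℝ) 1, G (x - Δt • w s x) := fun x => by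
    have h := enorm_sub_sq_le_lintegral hv (x - Δt • w₂ x) (Δt • (w₂ x - w₁ x))
    have hend : x - Δt • w₂ x + Δt • (w₂ x - w₁ x) = x - Δt • w₁ x := by module
    have hseg : ∀ s : ℝ, x - Δt • w₂ x + s • Δt • (w₂ x - w₁ x) = x - Δt • w s x := fun s => by
      simp only [hw]
      module
    simp only [hend, hseg] at h
    refine h.trans ?_
    gcongr
    rw [enorm_smul, Real.enorm_of_nonneg hΔt.le, enorm_sub_rev]
    gcongr
    exact le_iSup (fun x => (‖w₁ x - w₂ x‖₊ : ENNReal)) x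
  have hint : ∫⁻ x, (‖v (x - Δt • w₁ x) - v (x - Δt • w₂ x)‖₊ : ENNReal) ^ 2 ≤
      (ENNReal.ofReal (Real.sqrt 2 * Δt) * S) ^ 2 * ∫⁻ y, G y := by
    calc _ ≤ ∫⁻ x, (ENNReal.ofReal Δt * S) ^ 2 *
            ∫⁻ s in Set.Ioc (0 : ℝ) 1, G (x - Δt • w s x) := lintegral_mono hpoint
      _ = (ENNReal.ofReal Δt * S) ^ 2 *
            ∫⁻ s in Set.Ioc (0 : ℝ) 1, ∫⁻ x, G (x - Δt • w s x) := by
          rw [lintegral_const_mul _ hφm.lintegral_prod_right',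
            lintegral_lintegral_swap hφm.aemeasurable]
      _ ≤ (ENNReal.ofReal Δt * S) ^ 2 * ∫⁻ _ in Set.Ioc (0 : ℝ) 1, 2 * ∫⁻ y, G y := by
          refine mul_le_mul_right ?_ _
          refine setLIntegral_mono measurable_const fun s hs => ?_
          exact lintegral_comp_sub_smul_le hd hΔt hΔtL
            ((hw₂.const_smul (1 - s)).add (hw₁.const_smul s))
            (fun x => jacobianFrobeniusNorm_convexCombination_le (hw₂ x) (hw₁ x) hL (hJ₂ x)
              (hJ₁ x) hs.1.le hs.2) G
      _ = _ := by
          have h2 : ENNReal.ofReal (Real.sqrt 2) ^ 2 = 2 := by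
            rw [← ENNReal.ofReal_pow (Real.sqrt_nonneg _), Real.sq_sqrt (by norm_num)]
            norm_num
          rw [ENNReal.ofReal_mul (Real.sqrt_nonneg _), mul_assoc (ENNReal.ofReal √2),
            mul_pow (ENNReal.ofReal √2), h2]
          simp only [lintegral_const, Measure.restrict_apply, MeasurableSet.univ, Set.univ_inter,
            Real.volume_Ioc, sub_zero, ENNReal.ofReal_one, mul_one]
          ring
  calc _ ≤ ((ENNReal.ofReal (Real.sqrt 2 * Δt) * S) ^ 2 * ∫⁻ y, G y) ^ (1 / 2 : ℝ) :=
        ENNReal.rpow_le_rpow hint (by norm_num)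
    _ = _ := by
        rw [ENNReal.mul_rpow_of_nonneg _ _ (by norm_num), ← ENNReal.rpow_two, ← ENNReal.rpow_mul]
        norm_num
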